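/- (Proposition 1, CEO region decomposition.) The rate-distortion region RD_CEO equals the convex hull of the union of the two regions RD¹_CEO and RD²_CEO, i.e., RD_CEO = conv(RD¹_CEO ∪ RD²_CEO) as subsets of ℝ³. -/

import Mathlib

open Finset Real

noncomputable section

/-- Shannon entropy of a finitely supported nonnegative vector,
with the convention `0 · log 0 = 0` (natural logarithm). -/
def ent {α : Type} [Fintype α] (p : α → ℝ) : ℝ := ∑ a, Real.negMulLog (p a)

/-- `p` is a probability mass function on the finite alphabet `α`. -/
def IsPmf {α : Type} [Fintype α] (p : α → ℝ) : Prop := (∀ a, 0 ≤ p a) ∧ ∑ a, p a = 1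

/-- `w` is a conditional pmf (channel) from `α` to `β`. -/
def IsChan {α β : Type} [Fintype α] [Fintype β] (w : α → β → ℝ) : Prop := ∀ a, IsPmf (w a)

/-- Kullback–Leibler divergence between two vectors on a finite alphabet
(convention `0 · log (0/q) = 0` is automatic since `Real.log` of junk is multiplied by `0`). -/
def KL {α : Type} [Fintype α] (r q : α → ℝ) : ℝ := ∑ a, r a * Real.log (r a / q a)

variable {X Y1 Y2 U1 U2 : Type} [Fintype X] [Fintype Y1] [Fintype Y2] [Fintype U1] [Fintype U2]

/-- The joint pmf `p(x,y₁,y₂,u₁,u₂) = p(x)p(y₁|x)p(y₂|x)p(u₁|y₁)p(u₂|y₂)`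
induced by the CEO source `(pX, W1, W2)` and a test-channel pair `(p1, p2)`. -/
def ceoJoint (pX : X → ℝ) (W1 : X → Y1 → ℝ) (W2 : X → Y2 → ℝ)
    (p1 : Y1 → U1 → ℝ) (p2 : Y2 → U2 → ℝ) : X × Y1 × Y2 × U1 × U2 → ℝ :=
  fun z => pX z.1 * W1 z.1 z.2.1 * W2 z.1 z.2.2.1 * p1 z.2.1 z.2.2.2.1 * p2 z.2.2.1 z.2.2.2.2

/-- Marginal `p(x,u₁,u₂)`. -/
def mXU (j : X × Y1 × Y2 × U1 × U2 → ℝ) : X × U1 × U2 → ℝ :=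
  fun z => ∑ y1, ∑ y2, j (z.1, y1, y2, z.2.1, z.2.2)

/-- Marginal `p(u₁,u₂)`. -/
def mU12 (j : X × Y1 × Y2 × U1 × U2 → ℝ) : U1 × U2 → ℝ :=
  fun u => ∑ x, mXU j (x, u.1, u.2)

/-- Marginal `p(u₂)`. -/
def mU2 (j : X × Y1 × Y2 × U1 × U2 → ℝ) : U2 → ℝ := fun u2 => ∑ u1, mU12 j (u1, u2)

/-- Marginal `p(y₁,u₁,u₂)`. -/
def mY1U (j : X × Y1 × Y2 × U1 × U2 → ℝ) : Y1 × U1 × U2 → ℝ :=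
  fun z => ∑ x, ∑ y2, j (x, z.1, y2, z.2.1, z.2.2)

/-- Marginal `p(y₁,u₂)`. -/
def mY1U2 (j : X × Y1 × Y2 × U1 × U2 → ℝ) : Y1 × U2 → ℝ :=
  fun z => ∑ u1, mY1U j (z.1, u1, z.2)

/-- Marginal `p(y₂,u₂)`. -/
def mY2U2 (j : X × Y1 × Y2 × U1 × U2 → ℝ) : Y2 × U2 → ℝ :=
  fun z => ∑ x, ∑ y1, ∑ u1, j (x, y1, z.1, u1, z.2)

/-- Marginal `p(y₂)`. -/
def mY2 (j : X × Y1 × Y2 × U1 × U2 → ℝ) : Y2 → ℝ := fun y2 => ∑ u2, mY2U2 j (y2, u2)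

/-- Conditional entropy `H(X|U₁,U₂)` of the joint pmf `j`. -/
def condHX (j : X × Y1 × Y2 × U1 × U2 → ℝ) : ℝ := ent (mXU j) - ent (mU12 j)

/-- Conditional mutual information `I(Y₁;U₁|U₂)` of the joint pmf `j`. -/
def I1c (j : X × Y1 × Y2 × U1 × U2 → ℝ) : ℝ :=
  ent (mY1U2 j) + ent (mU12 j) - ent (mU2 j) - ent (mY1U j)

/-- Mutual information `I(Y₂;U₂)` of the joint pmf `j`. -/
def I2m (j : X × Y1 × Y2 × U1 × U2 → ℝ) : ℝ := ent (mY2 j) + ent (mU2 j) - ent (mY2U2 j)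

/-- The functional `F_s(P) = H(X|U₁,U₂) + s₁ I(Y₁;U₁|U₂) + s₂ I(Y₂;U₂)`. -/
def Fs (s1 s2 : ℝ) (j : X × Y1 × Y2 × U1 × U2 → ℝ) : ℝ :=
  condHX j + s1 * I1c j + s2 * I2m j

/-- `D¹_CEO(R₁,R₂)`: the minimal `H(X|U₁,U₂)` over test-channel pairs into the
auxiliary alphabets `V1`, `V2`, subject to `I(Y₁;U₁|U₂) ≤ R₁` and `I(Y₂;U₂) ≤ R₂`. -/
def Dceo1 (V1 V2 : Type) [Fintype V1] [Fintype V2]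
    (pX : X → ℝ) (W1 : X → Y1 → ℝ) (W2 : X → Y2 → ℝ) (R1 R2 : ℝ) : ℝ :=
  sInf {d : ℝ | ∃ p1 : Y1 → V1 → ℝ, ∃ p2 : Y2 → V2 → ℝ, IsChan p1 ∧ IsChan p2 ∧
    I1c (ceoJoint pX W1 W2 p1 p2) ≤ R1 ∧ I2m (ceoJoint pX W1 W2 p1 p2) ≤ R2 ∧
    d = condHX (ceoJoint pX W1 W2 p1 p2)}

/-- Marginal `p(y₁)` of the source. -/
def pY1m (pX : X → ℝ) (W1 : X → Y1 → ℝ) : Y1 → ℝ := fun y1 => ∑ x, pX x * W1 x y1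

/-- Marginal `p(y₂)` of the source. -/
def pY2m (pX : X → ℝ) (W2 : X → Y2 → ℝ) : Y2 → ℝ := fun y2 => ∑ x, pX x * W2 x y2

/-- `p(u₁|x) = Σ_{y₁} p(y₁|x) p(u₁|y₁)`. -/
def pU1X (W1 : X → Y1 → ℝ) (p1 : Y1 → U1 → ℝ) : X → U1 → ℝ :=
  fun x u1 => ∑ y1, W1 x y1 * p1 y1 u1

/-- `p(u₂|x) = Σ_{y₂} p(y₂|x) p(u₂|y₂)`. -/
def pU2X (W2 : X → Y2 → ℝ) (p2 : Y2 → U2 → ℝ) : X → U2 → ℝ :=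
  fun x u2 => ∑ y2, W2 x y2 * p2 y2 u2

/-- `p(u₁,u₂,x) = p(x) p(u₁|x) p(u₂|x)`. -/
def pUUX (pX : X → ℝ) (W1 : X → Y1 → ℝ) (W2 : X → Y2 → ℝ)
    (p1 : Y1 → U1 → ℝ) (p2 : Y2 → U2 → ℝ) : U1 × U2 × X → ℝ :=
  fun z => pX z.2.2 * pU1X W1 p1 z.2.2 z.1 * pU2X W2 p2 z.2.2 z.2.1

/-- `p(u₁,u₂)`. -/
def pUU (pX : X → ℝ) (W1 : X → Y1 → ℝ) (W2 : X → Y2 → ℝ)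
    (p1 : Y1 → U1 → ℝ) (p2 : Y2 → U2 → ℝ) : U1 × U2 → ℝ :=
  fun u => ∑ x, pUUX pX W1 W2 p1 p2 (u.1, u.2, x)

/-- `p(u₂) = Σ_{y₂} p(y₂) p(u₂|y₂)`. -/
def pU2m (pX : X → ℝ) (W2 : X → Y2 → ℝ) (p2 : Y2 → U2 → ℝ) : U2 → ℝ :=
  fun u2 => ∑ y2, pY2m pX W2 y2 * p2 y2 u2

/-- The Blahut–Arimoto functional `F_s(P,Q)` (real-valued version; the convention
`0 · log 0 = 0` is automatic since vanishing coefficients kill the corresponding terms). -/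
def FsPQ (s1 s2 : ℝ) (pX : X → ℝ) (W1 : X → Y1 → ℝ) (W2 : X → Y2 → ℝ)
    (p1 : Y1 → U1 → ℝ) (p2 : Y2 → U2 → ℝ)
    (qX : U1 × U2 → X → ℝ) (qUU : U1 × U2 → ℝ) (qU2 : U2 → ℝ) : ℝ :=
  -(∑ u1, ∑ u2, ∑ x, pUUX pX W1 W2 p1 p2 (u1, u2, x) * Real.log (qX (u1, u2) x))
  - s1 * (∑ u1, ∑ u2, pUU pX W1 W2 p1 p2 (u1, u2) * Real.log (qUU (u1, u2)))
  - s2 * (∑ u2, pU2m pX W2 p2 u2 * Real.log (qU2 u2))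
  + s1 * (∑ u1, ∑ y1, p1 y1 u1 * pY1m pX W1 y1 * Real.log (p1 y1 u1))
  + s2 * (∑ u2, ∑ y2, p2 y2 u2 * pY2m pX W2 y2 * Real.log (p2 y2 u2))
  + s1 * (∑ u2, pU2m pX W2 p2 u2 * Real.log (pU2m pX W2 p2 u2))

/-- The extended-real value of a term `−a · log q`: it is `+∞` if `a > 0` and `q = 0`. -/
def nlogE (a q : ℝ) : EReal := if 0 < a ∧ q = 0 then ⊤ else ((-(a * Real.log q) : ℝ) : EReal)

/-- The Blahut–Arimoto functional `F_s(P,Q)`, with values in `ℝ ∪ {+∞}`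
(a term `−a log q` with `a > 0` and `q = 0` is `+∞`). -/
def FsPQE (s1 s2 : ℝ) (pX : X → ℝ) (W1 : X → Y1 → ℝ) (W2 : X → Y2 → ℝ)
    (p1 : Y1 → U1 → ℝ) (p2 : Y2 → U2 → ℝ)
    (qX : U1 × U2 → X → ℝ) (qUU : U1 × U2 → ℝ) (qU2 : U2 → ℝ) : EReal :=
  (∑ u1, ∑ u2, ∑ x, nlogE (pUUX pX W1 W2 p1 p2 (u1, u2, x)) (qX (u1, u2) x))
  + (s1 : EReal) * (∑ u1, ∑ u2, nlogE (pUU pX W1 W2 p1 p2 (u1, u2)) (qUU (u1, u2)))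
  + (s2 : EReal) * (∑ u2, nlogE (pU2m pX W2 p2 u2) (qU2 u2))
  + ((s1 * (∑ u1, ∑ y1, p1 y1 u1 * pY1m pX W1 y1 * Real.log (p1 y1 u1))
      + s2 * (∑ u2, ∑ y2, p2 y2 u2 * pY2m pX W2 y2 * Real.log (p2 y2 u2))
      + s1 * (∑ u2, pU2m pX W2 p2 u2 * Real.log (pU2m pX W2 p2 u2)) : ℝ) : EReal)

/-- Marginal `p(u₁)`. -/
def mU1 (j : X × Y1 × Y2 × U1 × U2 → ℝ) : U1 → ℝ := fun u1 => ∑ u2, mU12 j (u1, u2)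

/-- Marginal `p(y₂,u₁,u₂)`. -/
def mY2U (j : X × Y1 × Y2 × U1 × U2 → ℝ) : Y2 × U1 × U2 → ℝ :=
  fun z => ∑ x, ∑ y1, j (x, y1, z.1, z.2.1, z.2.2)

/-- Marginal `p(y₂,u₁)`. -/
def mY2U1 (j : X × Y1 × Y2 × U1 × U2 → ℝ) : Y2 × U1 → ℝ :=
  fun z => ∑ u2, mY2U j (z.1, z.2, u2)

/-- Marginal `p(y₁)`. -/
def mY1 (j : X × Y1 × Y2 × U1 × U2 → ℝ) : Y1 → ℝ := fun y1 => ∑ u2, mY1U2 j (y1, u2)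

/-- Marginal `p(y₁,u₁)`. -/
def mY1U1 (j : X × Y1 × Y2 × U1 × U2 → ℝ) : Y1 × U1 → ℝ :=
  fun z => ∑ u2, mY1U j (z.1, z.2, u2)

/-- Conditional mutual information `I(Y₂;U₂|U₁)`. -/
def I2c (j : X × Y1 × Y2 × U1 × U2 → ℝ) : ℝ :=
  ent (mY2U1 j) + ent (mU12 j) - ent (mU1 j) - ent (mY2U j)

/-- Mutual information `I(Y₁;U₁)`. -/
def I1m (j : X × Y1 × Y2 × U1 × U2 → ℝ) : ℝ := ent (mY1 j) + ent (mU1 j) - ent (mY1U1 j)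

/-- `D²_CEO(R₁,R₂)`: the minimal `H(X|U₁,U₂)` subject to `I(Y₂;U₂|U₁) ≤ R₂`
and `I(Y₁;U₁) ≤ R₁`. -/
def Dceo2 (V1 V2 : Type) [Fintype V1] [Fintype V2]
    (pX : X → ℝ) (W1 : X → Y1 → ℝ) (W2 : X → Y2 → ℝ) (R1 R2 : ℝ) : ℝ :=
  sInf {d : ℝ | ∃ p1 : Y1 → V1 → ℝ, ∃ p2 : Y2 → V2 → ℝ, IsChan p1 ∧ IsChan p2 ∧
    I2c (ceoJoint pX W1 W2 p1 p2) ≤ R2 ∧ I1m (ceoJoint pX W1 W2 p1 p2) ≤ R1 ∧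
    d = condHX (ceoJoint pX W1 W2 p1 p2)}

variable {Qt : Type} [Fintype Qt]

/-- The joint pmf `p(q,x,y₁,y₂,u₁,u₂) = p(q)p(x)p(y₁|x)p(y₂|x)p(u₁|y₁,q)p(u₂|y₂,q)`
induced by a time-sharing variable `Q` and conditional test channels. -/
def ceoJointQ (pQ : Qt → ℝ) (pX : X → ℝ) (W1 : X → Y1 → ℝ) (W2 : X → Y2 → ℝ)
    (c1 : Qt → Y1 → U1 → ℝ) (c2 : Qt → Y2 → U2 → ℝ) :
    Qt × X × Y1 × Y2 × U1 × U2 → ℝ :=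
  fun z => pQ z.1 * pX z.2.1 * W1 z.2.1 z.2.2.1 * W2 z.2.1 z.2.2.2.1
    * c1 z.1 z.2.2.1 z.2.2.2.2.1 * c2 z.1 z.2.2.2.1 z.2.2.2.2.2

/-- Marginal `p(u₁,u₂,q)`. -/
def mqU12 (j : Qt × X × Y1 × Y2 × U1 × U2 → ℝ) : U1 × U2 × Qt → ℝ :=
  fun z => ∑ x, ∑ y1, ∑ y2, j (z.2.2, x, y1, y2, z.1, z.2.1)

/-- Marginal `p(u₂,q)`. -/
def mqU2 (j : Qt × X × Y1 × Y2 × U1 × U2 → ℝ) : U2 × Qt → ℝ :=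
  fun z => ∑ u1, mqU12 j (u1, z.1, z.2)

/-- Marginal `p(u₁,q)`. -/
def mqU1 (j : Qt × X × Y1 × Y2 × U1 × U2 → ℝ) : U1 × Qt → ℝ :=
  fun z => ∑ u2, mqU12 j (z.1, u2, z.2)

/-- Marginal `p(y₁,u₂,q)`. -/
def mqY1U2 (j : Qt × X × Y1 × Y2 × U1 × U2 → ℝ) : Y1 × U2 × Qt → ℝ :=
  fun z => ∑ x, ∑ y2, ∑ u1, j (z.2.2, x, z.1, y2, u1, z.2.1)

/-- Marginal `p(y₁,u₁,u₂,q)`. -/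
def mqY1U12 (j : Qt × X × Y1 × Y2 × U1 × U2 → ℝ) : Y1 × U1 × U2 × Qt → ℝ :=
  fun z => ∑ x, ∑ y2, j (z.2.2.2, x, z.1, y2, z.2.1, z.2.2.1)

/-- Marginal `p(y₂,u₁,q)`. -/
def mqY2U1 (j : Qt × X × Y1 × Y2 × U1 × U2 → ℝ) : Y2 × U1 × Qt → ℝ :=
  fun z => ∑ x, ∑ y1, ∑ u2, j (z.2.2, x, y1, z.1, z.2.1, u2)

/-- Marginal `p(y₂,u₁,u₂,q)`. -/
def mqY2U12 (j : Qt × X × Y1 × Y2 × U1 × U2 → ℝ) : Y2 × U1 × U2 × Qt → ℝ :=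
  fun z => ∑ x, ∑ y1, j (z.2.2.2, x, y1, z.1, z.2.1, z.2.2.1)

/-- Marginal `p(y₁,y₂,q)`. -/
def mqY12 (j : Qt × X × Y1 × Y2 × U1 × U2 → ℝ) : Y1 × Y2 × Qt → ℝ :=
  fun z => ∑ x, ∑ u1, ∑ u2, j (z.2.2, x, z.1, z.2.1, u1, u2)

/-- Marginal `p(q)`. -/
def mqQ (j : Qt × X × Y1 × Y2 × U1 × U2 → ℝ) : Qt → ℝ :=
  fun q => ∑ y1, ∑ y2, mqY12 j (y1, y2, q)

/-- Marginal `p(y₁,y₂,u₁,u₂,q)`. -/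
def mqY12U12 (j : Qt × X × Y1 × Y2 × U1 × U2 → ℝ) : Y1 × Y2 × U1 × U2 × Qt → ℝ :=
  fun z => ∑ x, j (z.2.2.2.2, x, z.1, z.2.1, z.2.2.1, z.2.2.2.1)

/-- Marginal `p(x,u₁,u₂,q)`. -/
def mqXU12 (j : Qt × X × Y1 × Y2 × U1 × U2 → ℝ) : X × U1 × U2 × Qt → ℝ :=
  fun z => ∑ y1, ∑ y2, j (z.2.2.2, z.1, y1, y2, z.2.1, z.2.2.1)

/-- Conditional mutual information `I(U₁;Y₁|U₂,Q)`. -/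
def IQ1 (j : Qt × X × Y1 × Y2 × U1 × U2 → ℝ) : ℝ :=
  ent (mqY1U2 j) + ent (mqU12 j) - ent (mqU2 j) - ent (mqY1U12 j)

/-- Conditional mutual information `I(U₂;Y₂|U₁,Q)`. -/
def IQ2 (j : Qt × X × Y1 × Y2 × U1 × U2 → ℝ) : ℝ :=
  ent (mqY2U1 j) + ent (mqU12 j) - ent (mqU1 j) - ent (mqY2U12 j)

/-- Conditional mutual information `I(U₁,U₂;Y₁,Y₂|Q)`. -/
def IQsum (j : Qt × X × Y1 × Y2 × U1 × U2 → ℝ) : ℝ :=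
  ent (mqY12 j) + ent (mqU12 j) - ent (mqQ j) - ent (mqY12U12 j)

/-- Conditional entropy `H(X|U₁,U₂,Q)`. -/
def HXQ (j : Qt × X × Y1 × Y2 × U1 × U2 → ℝ) : ℝ := ent (mqXU12 j) - ent (mqU12 j)

/-! Since U₁ – Y₁ – Y₂ – U₂ is a Markov chain, I(Yᵢ;Uᵢ) = I(Yᵢ;Uᵢ|Uⱼ) + I(U₁;U₂) and the sum rate
I(U₁,U₂;Y₁,Y₂) equals both I(Y₁;U₁|U₂) + I(Y₂;U₂) and I(Y₁;U₁) + I(Y₂;U₂|U₁). A fixed pair of test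
channels therefore achieves exactly the triples dominating a point of the segment between two corner
points, one in RD¹ and one in RD².

All functionals are homogeneous in the joint vector, so time sharing averages them: a triple of
RD_CEO dominates a point of the segment between the two averaged corner points, which lies in
the convex hull. Conversely, by Carathéodory in ℝ³, a point of the hull averages at most four points
of RD¹ ∪ RD², and each of these satisfies the rate constraints of its own test channels because
I(U₁;U₂) ≥ 0.
-/

section FiniteEntropy

variable {α β γ δ : Type} [Fintype α] [Fintype β] [Fintype γ] [Fintype δ]

lemma IsPmf.nonempty {p : α → ℝ} (hp : IsPmf p) : Nonempty α := by
  by_contra h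
  rw [not_nonempty_iff] at h
  simpa using hp.2

lemma exists_isPmf (α : Type) [Fintype α] [Nonempty α] : ∃ p : α → ℝ, IsPmf p := by
  classical
  exact ⟨_, single_mem_stdSimplex ℝ (Classical.arbitrary α)⟩

lemma isCompact_setOf_isChan : IsCompact {w : α → β → ℝ | IsChan w} := by
  have : {w : α → β → ℝ | IsChan w} = Set.univ.pi fun _ => stdSimplex ℝ β := by
    ext w
    simp [IsChan, IsPmf, stdSimplex]
  rw [this]
  exact isCompact_univ_pi fun _ => isCompact_stdSimplex ℝ β

@[fun_prop]
lemma continuous_ent : Continuous (ent : (α → ℝ) → ℝ) := by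
  unfold ent
  fun_prop

lemma ent_comp_equiv (e : α ≃ β) (p : β → ℝ) : ent (fun a => p (e a)) = ent p :=
  e.sum_comp fun b => negMulLog (p b)

lemma ent_smul (c : ℝ) (p : α → ℝ) :
    ent (c • p) = (∑ a, p a) * negMulLog c + c * ent p := by
  simp only [ent, Pi.smul_apply, smul_eq_mul, negMulLog_mul, sum_add_distrib, sum_mul, mul_sum]

lemma ent_eq_sum_ent (e : α × β ≃ γ) (p : γ → ℝ) :
    ent p = ∑ b, ent fun a => p (e (a, b)) := by
  rw [← ent_comp_equiv e, ent, Fintype.sum_prod_type_right]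
  rfl

/-- The conditional entropy `H(B|A)` of the output of a channel `w` given its input, the input
being weighted by the (possibly unnormalized) vector `p`. -/
def condEnt (p : α → ℝ) (w : α → β → ℝ) : ℝ := ∑ a, p a * ent (w a)

lemma condEnt_fst (p : α × β → ℝ) (w : α → γ → ℝ) :
    condEnt p (fun z => w z.1) = condEnt (fun a => ∑ b, p (a, b)) w := by
  simp only [condEnt, Fintype.sum_prod_type, sum_mul]

lemma condEnt_snd (p : α × β → ℝ) (w : β → γ → ℝ) :
    condEnt p (fun z => w z.2) = condEnt (fun b => ∑ a, p (a, b)) w := by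
  simp only [condEnt, Fintype.sum_prod_type_right, sum_mul]

lemma ent_chain_rule (p : α → ℝ) {w : α → β → ℝ} (hw : IsChan w) :
    ent (fun z : α × β => p z.1 * w z.1 z.2) = ent p + condEnt p w := by
  have hrow (a : α) : ent (fun b => p a * w a b) = negMulLog (p a) + p a * ent (w a) := by
    have := ent_smul (p a) (w a)
    rwa [(hw a).2, one_mul] at this
  rw [ent_eq_sum_ent (Equiv.prodComm β α)]
  simp only [Equiv.prodComm_apply, Prod.swap_prod_mk, hrow, sum_add_distrib]
  rfl

lemma IsPmf.mul {p : α → ℝ} {q : β → ℝ} (hp : IsPmf p) (hq : IsPmf q) :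
    IsPmf fun z : α × β => p z.1 * q z.2 := by
  refine ⟨fun z => mul_nonneg (hp.1 z.1) (hq.1 z.2), ?_⟩
  rw [Fintype.sum_prod_type, ← sum_mul_sum, hp.2, hq.2, one_mul]

lemma ent_mul {p : α → ℝ} {q : β → ℝ} (hp : IsPmf p) (hq : IsPmf q) :
    ent (fun z : α × β => p z.1 * q z.2) = ent p + ent q := by
  rw [ent_chain_rule p fun _ => hq, condEnt, ← sum_mul, hp.2, one_mul]

lemma condEnt_mul (p : α × β → ℝ) {v : α → γ → ℝ} {w : β → δ → ℝ}
    (hv : IsChan v) (hw : IsChan w) :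
    condEnt p (fun a (z : γ × δ) => v a.1 z.1 * w a.2 z.2) =
      condEnt (fun a => ∑ b, p (a, b)) v + condEnt (fun b => ∑ a, p (a, b)) w := by
  rw [← condEnt_fst, ← condEnt_snd]
  simp only [condEnt, ent_mul (hv _) (hw _), mul_add, sum_add_distrib]

lemma sub_le_mul_log_div {p q : ℝ} (hp : 0 ≤ p) (hq : 0 ≤ q) (hpq : q = 0 → p = 0) :
    p - q ≤ p * log (p / q) := by
  rcases hq.eq_or_lt with rfl | hq
  · simp [hpq rfl]
  · have h := mul_nonneg hq.le (InformationTheory.klFun_nonneg (div_nonneg hp hq.le))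
    have : q * InformationTheory.klFun (p / q) = p * log (p / q) + q - p := by
      rw [InformationTheory.klFun]
      field_simp
    linarith

lemma sum_sub_sum_le_KL {p q : α → ℝ} (hp : ∀ a, 0 ≤ p a) (hq : ∀ a, 0 ≤ q a)
    (hpq : ∀ a, q a = 0 → p a = 0) : ∑ a, p a - ∑ a, q a ≤ KL p q := by
  rw [← sum_sub_distrib]
  exact sum_le_sum fun a _ => sub_le_mul_log_div (hp a) (hq a) (hpq a)

/-- The product of the two marginals of `g`, rescaled to the mass of `g`; the relative entropy of
`g` with respect to it is the mutual information of the two coordinates. -/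
def prodMarginals (g : α × β → ℝ) : α × β → ℝ :=
  fun z => (∑ b, g (z.1, b)) * (∑ a, g (a, z.2)) / ∑ z, g z

lemma prodMarginals_nonneg {g : α × β → ℝ} (hg : ∀ z, 0 ≤ g z) (z : α × β) :
    0 ≤ prodMarginals g z :=
  div_nonneg (mul_nonneg (sum_nonneg fun _ _ => hg _) (sum_nonneg fun _ _ => hg _))
    (sum_nonneg fun _ _ => hg _)

lemma sum_prodMarginals (g : α × β → ℝ) : ∑ z, prodMarginals g z = ∑ z, g z := by
  calc ∑ z, prodMarginals g z
      = (∑ a, ∑ b, g (a, b)) * (∑ b, ∑ a, g (a, b)) / ∑ z, g z := by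
        rw [sum_mul_sum, sum_div, Fintype.sum_prod_type]
        simp only [prodMarginals, sum_div]
    _ = ∑ z, g z := by
        rw [← Fintype.sum_prod_type, ← Fintype.sum_prod_type_right, mul_self_div_self]

lemma marginals_pos {g : α × β → ℝ} (hg : ∀ z, 0 ≤ g z) {z : α × β} (hz : g z ≠ 0) :
    0 < ∑ b, g (z.1, b) ∧ 0 < ∑ a, g (a, z.2) ∧ 0 < ∑ z, g z := by
  have hz : 0 < g z := (hg z).lt_of_ne' hz
  exact ⟨sum_pos' (fun _ _ => hg _) ⟨z.2, mem_univ _, hz⟩,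
    sum_pos' (fun _ _ => hg _) ⟨z.1, mem_univ _, hz⟩,
    sum_pos' (fun _ _ => hg _) ⟨z, mem_univ _, hz⟩⟩

lemma KL_prodMarginals {g : α × β → ℝ} (hg : ∀ z, 0 ≤ g z) :
    KL g (prodMarginals g) = ent (fun a => ∑ b, g (a, b)) + ent (fun b => ∑ a, g (a, b)) -
      ent g - negMulLog (∑ z, g z) := by
  have hlog (z : α × β) : g z * log (g z / prodMarginals g z) =
      g z * log (g z) + g z * log (∑ z, g z) - g z * log (∑ b, g (z.1, b)) -
        g z * log (∑ a, g (a, z.2)) := by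
    rcases eq_or_ne (g z) 0 with h | h
    · simp [h]
    · obtain ⟨hr, hc, hT⟩ := marginals_pos hg h
      rw [prodMarginals, log_div h (by positivity), log_div (by positivity) hT.ne',
        log_mul hr.ne' hc.ne']
      ring
  have hfst : ∑ z : α × β, g z * log (∑ b, g (z.1, b)) = -ent fun a => ∑ b, g (a, b) := by
    simp only [Fintype.sum_prod_type, ← sum_mul, ent, negMulLog, neg_mul, sum_neg_distrib, neg_neg]
  have hsnd : ∑ z : α × β, g z * log (∑ a, g (a, z.2)) = -ent fun b => ∑ a, g (a, b) := by
    simp only [Fintype.sum_prod_type_right, ← sum_mul, ent, negMulLog, neg_mul, sum_neg_distrib,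
      neg_neg]
  have hself : ∑ z, g z * log (g z) = -ent g := by
    simp only [ent, negMulLog, neg_mul, sum_neg_distrib, neg_neg]
  simp only [KL, hlog, sum_sub_distrib, sum_add_distrib, hfst, hsnd, hself, ← sum_mul, negMulLog]
  ring

lemma ent_add_negMulLog_sum_le {g : α × β → ℝ} (hg : ∀ z, 0 ≤ g z) :
    ent g + negMulLog (∑ z, g z) ≤
      ent (fun a => ∑ b, g (a, b)) + ent (fun b => ∑ a, g (a, b)) := by
  have gibbs : ∑ z, g z - ∑ z, prodMarginals g z ≤ KL g (prodMarginals g) := by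
    refine sum_sub_sum_le_KL hg (prodMarginals_nonneg hg) fun z hz => ?_
    by_contra h
    obtain ⟨hr, hc, hT⟩ := marginals_pos hg h
    exact (div_pos (mul_pos hr hc) hT).ne' hz
  rw [sum_prodMarginals, KL_prodMarginals hg] at gibbs
  linarith

lemma ent_submodular {g : α × β × γ → ℝ} (hg : ∀ z, 0 ≤ g z) :
    ent g + ent (fun c => ∑ b, ∑ a, g (a, b, c)) ≤
      ent (fun z : α × γ => ∑ b, g (z.1, b, z.2)) +
        ent (fun z : β × γ => ∑ a, g (a, z.1, z.2)) := by
  rw [ent_eq_sum_ent (Equiv.prodAssoc α β γ) g,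
    ent_eq_sum_ent (Equiv.refl (α × γ)), ent_eq_sum_ent (Equiv.refl (β × γ)), ent,
    ← sum_add_distrib, ← sum_add_distrib]
  refine sum_le_sum fun c _ => ?_
  have := ent_add_negMulLog_sum_le (g := fun z : α × β => g (z.1, z.2, c)) fun z => hg _
  rwa [Fintype.sum_prod_type_right] at this

end FiniteEntropy

section JointFunctionals

/-- The joint vector `j` with the two encoders exchanged. It turns every statement about encoder 1
into the corresponding statement about encoder 2. -/
def swapSources {X Y1 Y2 U1 U2 : Type} (j : X × Y1 × Y2 × U1 × U2 → ℝ) :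
    X × Y2 × Y1 × U2 × U1 → ℝ :=
  fun z => j (z.1, z.2.2.1, z.2.1, z.2.2.2.2, z.2.2.2.1)

lemma swapSources_ceoJoint {X Y1 Y2 U1 U2 : Type} (pX : X → ℝ) (W1 : X → Y1 → ℝ)
    (W2 : X → Y2 → ℝ) (p1 : Y1 → U1 → ℝ) (p2 : Y2 → U2 → ℝ) :
    swapSources (ceoJoint pX W1 W2 p1 p2) = ceoJoint pX W2 W1 p2 p1 := by
  funext z
  simp only [swapSources, ceoJoint]
  ring

/-- The mutual information `I(U₁;U₂)` of the joint pmf `j`. -/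
def IU12 (j : X × Y1 × Y2 × U1 × U2 → ℝ) : ℝ := ent (mU1 j) + ent (mU2 j) - ent (mU12 j)

/-- Marginal `p(y₁,y₂)`. -/
def mY12 (j : X × Y1 × Y2 × U1 × U2 → ℝ) : Y1 × Y2 → ℝ :=
  fun z => ∑ x, ∑ u1, ∑ u2, j (x, z.1, z.2, u1, u2)

/-- Marginal `p(y₁,y₂,u₁,u₂)`. -/
def mY12U (j : X × Y1 × Y2 × U1 × U2 → ℝ) : Y1 × Y2 × U1 × U2 → ℝ :=
  fun z => ∑ x, j (x, z.1, z.2.1, z.2.2.1, z.2.2.2)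

/-- The mutual information `I(U₁,U₂;Y₁,Y₂)` of `j`. The third term vanishes when `j` has mass `1`;
it makes the functional homogeneous on unnormalized vectors. -/
def Isum (j : X × Y1 × Y2 × U1 × U2 → ℝ) : ℝ :=
  ent (mY12 j) + ent (mU12 j) - negMulLog (∑ y1, ∑ y2, mY12 j (y1, y2)) - ent (mY12U j)

variable (j : X × Y1 × Y2 × U1 × U2 → ℝ)

omit [Fintype X] [Fintype U1] [Fintype U2] in
lemma mXU_swapSources (z : X × U2 × U1) : mXU (swapSources j) z = mXU j (z.1, z.2.2, z.2.1) :=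
  sum_comm

omit [Fintype U1] [Fintype U2] in
lemma mU12_swapSources (u : U2 × U1) : mU12 (swapSources j) u = mU12 j u.swap :=
  sum_congr rfl fun _ _ => mXU_swapSources j _

omit [Fintype U1] in
lemma mU2_swapSources : mU2 (swapSources j) = mU1 j := by
  unfold mU1 mU2
  simp only [mU12_swapSources, Prod.swap_prod_mk]

omit [Fintype U2] in
lemma mU1_swapSources : mU1 (swapSources j) = mU2 j := (mU2_swapSources (swapSources j)).symm

lemma ent_mU12_swapSources : ent (mU12 (swapSources j)) = ent (mU12 j) := by
  rw [funext (mU12_swapSources j)]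
  exact ent_comp_equiv (Equiv.prodComm U2 U1) (mU12 j)

lemma condHX_swapSources : condHX (swapSources j) = condHX j := by
  have hXU : ent (mXU (swapSources j)) = ent (mXU j) := by
    rw [funext (mXU_swapSources j)]
    exact ent_comp_equiv ((Equiv.refl X).prodCongr (Equiv.prodComm U2 U1)) (mXU j)
  rw [condHX, condHX, hXU, ent_mU12_swapSources]

lemma I1c_swapSources : I1c (swapSources j) = I2c j := by
  have hY1U : ent (mY1U (swapSources j)) = ent (mY2U j) :=
    ent_comp_equiv ((Equiv.refl Y2).prodCongr (Equiv.prodComm U2 U1)) (mY2U j)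
  rw [I1c, I2c, hY1U, ent_mU12_swapSources, mU2_swapSources]
  rfl

omit [Fintype Y1] [Fintype U1] in
lemma mY2U2_swapSources : mY2U2 (swapSources j) = mY1U1 j :=
  funext fun _ => (sum_congr rfl fun _ _ => sum_comm).trans sum_comm

omit [Fintype Y1] in
lemma mY2_swapSources : mY2 (swapSources j) = mY1 j := by
  funext y1
  rw [mY2, mY2U2_swapSources]
  exact sum_comm

omit [Fintype Y2] in
lemma mY1_swapSources : mY1 (swapSources j) = mY2 j := (mY2_swapSources (swapSources j)).symm

lemma I2m_swapSources : I2m (swapSources j) = I1m j := by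
  rw [I2m, I1m, mY2_swapSources, mU2_swapSources, mY2U2_swapSources]

lemma I1m_swapSources : I1m (swapSources j) = I2m j :=
  (I2m_swapSources (swapSources j)).symm

lemma IU12_swapSources : IU12 (swapSources j) = IU12 j := by
  rw [IU12, IU12, mU2_swapSources, mU1_swapSources, ent_mU12_swapSources, add_comm (ent (mU2 j))]

omit [Fintype U1] [Fintype U2] in
lemma sum_mY1U (u : U1 × U2) : ∑ y1, mY1U j (y1, u) = mU12 j u := sum_comm

omit [Fintype U1] in
lemma sum_mY1U1 (u1 : U1) : ∑ y1, mY1U1 j (y1, u1) = mU1 j u1 := by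
  calc ∑ y1, ∑ u2, mY1U j (y1, u1, u2) = ∑ u2, ∑ y1, mY1U j (y1, u1, u2) := sum_comm
    _ = mU1 j u1 := sum_congr rfl fun u2 _ => sum_mY1U j (u1, u2)

lemma sum_mU12 : ∑ u, mU12 j u = ∑ z, j z := by
  calc ∑ u, ∑ x, ∑ y1, ∑ y2, j (x, y1, y2, u)
      = ∑ x, ∑ y1, ∑ y2, ∑ u, j (x, y1, y2, u) :=
        sum_comm.trans <| sum_congr rfl fun _ _ => sum_comm.trans <| sum_congr rfl fun _ _ =>
          sum_comm
    _ = ∑ z, j z := by simp only [Fintype.sum_prod_type]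

lemma sum_mY12U : ∑ z, mY12U j z = ∑ z, j z := by
  rw [Fintype.sum_prod_type j]
  exact sum_comm

lemma sum_sum_mY12 : ∑ y1, ∑ y2, mY12 j (y1, y2) = ∑ z, j z := by
  calc ∑ y1, ∑ y2, ∑ x, ∑ u1, ∑ u2, j (x, y1, y2, u1, u2)
      = ∑ x, ∑ y1, ∑ y2, ∑ u1, ∑ u2, j (x, y1, y2, u1, u2) :=
        (sum_congr rfl fun _ _ => sum_comm).trans sum_comm
    _ = ∑ z, j z := by simp only [Fintype.sum_prod_type]

omit [Fintype Y1] in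
lemma sum_mY12_right (y1 : Y1) : ∑ y2, mY12 j (y1, y2) = mY1 j y1 := by
  calc ∑ y2, ∑ x, ∑ u1, ∑ u2, j (x, y1, y2, u1, u2)
      = ∑ z : X × Y2, ∑ u : U1 × U2, j (z.1, y1, z.2, u) := by
        rw [sum_comm]
        simp only [Fintype.sum_prod_type]
    _ = ∑ u : U1 × U2, mY1U j (y1, u) := by
        rw [sum_comm]
        simp only [mY1U, Fintype.sum_prod_type]
    _ = mY1 j y1 := Fintype.sum_prod_type_right _

omit [Fintype Y2] in
lemma sum_mY12_left (y2 : Y2) : ∑ y1, mY12 j (y1, y2) = mY2 j y2 := by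
  rw [← mY1_swapSources, ← sum_mY12_right]
  exact sum_congr rfl fun _ _ => sum_congr rfl fun _ _ => sum_comm

variable {j}

lemma I1c_nonneg (hj : ∀ z, 0 ≤ j z) : 0 ≤ I1c j := by
  have := ent_submodular (g := mY1U j) fun z => sum_nonneg fun _ _ => sum_nonneg fun _ _ => hj _
  simp only [sum_mY1U] at this
  change ent (mY1U j) + ent (mU2 j) ≤ ent (mY1U2 j) + ent (mU12 j) at this
  rw [I1c]
  linarith

lemma I2c_nonneg (hj : ∀ z, 0 ≤ j z) : 0 ≤ I2c j := by
  rw [← I1c_swapSources]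
  exact I1c_nonneg fun _ => hj _

lemma IU12_nonneg (hj : IsPmf j) : 0 ≤ IU12 j := by
  have hU (u) : 0 ≤ mU12 j u :=
    sum_nonneg fun _ _ => sum_nonneg fun _ _ => sum_nonneg fun _ _ => hj.1 _
  have := ent_add_negMulLog_sum_le hU
  rw [sum_mU12, hj.2, negMulLog_one, add_zero] at this
  exact sub_nonneg.2 this

end JointFunctionals

section CeoJoint

variable {pX : X → ℝ} {W1 : X → Y1 → ℝ} {W2 : X → Y2 → ℝ} {p1 : Y1 → U1 → ℝ} {p2 : Y2 → U2 → ℝ}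

lemma ceoJoint_nonneg (hpX : IsPmf pX) (hW1 : IsChan W1) (hW2 : IsChan W2) (hp1 : IsChan p1)
    (hp2 : IsChan p2) (z : X × Y1 × Y2 × U1 × U2) : 0 ≤ ceoJoint pX W1 W2 p1 p2 z :=
  mul_nonneg (mul_nonneg (mul_nonneg (mul_nonneg (hpX.1 _) ((hW1 _).1 _)) ((hW2 _).1 _))
    ((hp1 _).1 _)) ((hp2 _).1 _)

lemma isPmf_ceoJoint (hpX : IsPmf pX) (hW1 : IsChan W1) (hW2 : IsChan W2) (hp1 : IsChan p1)
    (hp2 : IsChan p2) : IsPmf (ceoJoint pX W1 W2 p1 p2) := by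
  refine ⟨ceoJoint_nonneg hpX hW1 hW2 hp1 hp2, ?_⟩
  simp only [ceoJoint, Fintype.sum_prod_type, ← mul_sum, (hp1 _).2, (hp2 _).2, (hW1 _).2,
    (hW2 _).2, mul_one, hpX.2]

omit [Fintype U2] in
lemma mY1U_ceoJoint (hp1 : IsChan p1) (y1 : Y1) (u1 : U1) (u2 : U2) :
    mY1U (ceoJoint pX W1 W2 p1 p2) (y1, u1, u2) =
      mY1U2 (ceoJoint pX W1 W2 p1 p2) (y1, u2) * p1 y1 u1 := by
  have factor (u1 : U1) : mY1U (ceoJoint pX W1 W2 p1 p2) (y1, u1, u2) =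
      p1 y1 u1 * ∑ x, ∑ y2, pX x * W1 x y1 * W2 x y2 * p2 y2 u2 := by
    simp only [mY1U, ceoJoint, mul_sum]
    exact sum_congr rfl fun _ _ => sum_congr rfl fun _ _ => by ring
  rw [mY1U2, factor]
  simp only [factor, ← sum_mul, (hp1 y1).2]
  ring

lemma I1c_ceoJoint (hp1 : IsChan p1) :
    I1c (ceoJoint pX W1 W2 p1 p2) = ent (mU12 (ceoJoint pX W1 W2 p1 p2)) -
      ent (mU2 (ceoJoint pX W1 W2 p1 p2)) - condEnt (mY1 (ceoJoint pX W1 W2 p1 p2)) p1 := by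
  set J := ceoJoint pX W1 W2 p1 p2
  have hY1U : ent (mY1U J) = ent (mY1U2 J) + condEnt (mY1 J) p1 := by
    calc ent (mY1U J) = ent fun z : (Y1 × U2) × U1 => mY1U2 J z.1 * p1 z.1.1 z.2 := by
          rw [← ent_comp_equiv ((Equiv.prodAssoc Y1 U2 U1).trans
            ((Equiv.refl Y1).prodCongr (Equiv.prodComm U2 U1)))]
          exact congrArg ent (funext fun z => mY1U_ceoJoint hp1 _ _ _)
      _ = ent (mY1U2 J) + condEnt (mY1 J) p1 := by
          rw [ent_chain_rule _ fun z : Y1 × U2 => hp1 z.1, condEnt_fst]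
          rfl
  rw [I1c, hY1U]
  ring

lemma mY1U1_ceoJoint (hp1 : IsChan p1) (y1 : Y1) (u1 : U1) :
    mY1U1 (ceoJoint pX W1 W2 p1 p2) (y1, u1) =
      mY1 (ceoJoint pX W1 W2 p1 p2) y1 * p1 y1 u1 := by
  simp only [mY1U1, mY1U_ceoJoint hp1, ← sum_mul]
  rfl

lemma I1m_ceoJoint (hp1 : IsChan p1) :
    I1m (ceoJoint pX W1 W2 p1 p2) = ent (mU1 (ceoJoint pX W1 W2 p1 p2)) -
      condEnt (mY1 (ceoJoint pX W1 W2 p1 p2)) p1 := by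
  set J := ceoJoint pX W1 W2 p1 p2
  have hY1U1 : mY1U1 J = fun z => mY1 J z.1 * p1 z.1 z.2 :=
    funext fun z => mY1U1_ceoJoint hp1 z.1 z.2
  rw [I1m, hY1U1, ent_chain_rule _ hp1]
  ring

lemma I1m_eq_I1c_add_IU12 (hp1 : IsChan p1) :
    I1m (ceoJoint pX W1 W2 p1 p2) =
      I1c (ceoJoint pX W1 W2 p1 p2) + IU12 (ceoJoint pX W1 W2 p1 p2) := by
  rw [I1m_ceoJoint hp1, I1c_ceoJoint hp1, IU12]
  ring

lemma I2m_eq_I2c_add_IU12 (hp2 : IsChan p2) :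
    I2m (ceoJoint pX W1 W2 p1 p2) =
      I2c (ceoJoint pX W1 W2 p1 p2) + IU12 (ceoJoint pX W1 W2 p1 p2) := by
  rw [← I1m_swapSources, ← I1c_swapSources, ← IU12_swapSources, swapSources_ceoJoint,
    I1m_eq_I1c_add_IU12 hp2]

lemma I2m_ceoJoint (hp2 : IsChan p2) :
    I2m (ceoJoint pX W1 W2 p1 p2) = ent (mU2 (ceoJoint pX W1 W2 p1 p2)) -
      condEnt (mY2 (ceoJoint pX W1 W2 p1 p2)) p2 := by
  rw [← I1m_swapSources, ← mU1_swapSources, ← mY1_swapSources, swapSources_ceoJoint,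
    I1m_ceoJoint hp2]

lemma mY12U_ceoJoint (hp1 : IsChan p1) (hp2 : IsChan p2) (y : Y1 × Y2) (u : U1 × U2) :
    mY12U (ceoJoint pX W1 W2 p1 p2) (y.1, y.2, u) =
      mY12 (ceoJoint pX W1 W2 p1 p2) y * (p1 y.1 u.1 * p2 y.2 u.2) := by
  simp only [mY12U, mY12, ceoJoint, ← mul_sum, (hp1 _).2, (hp2 _).2, mul_one, sum_mul, mul_assoc]

lemma Isum_ceoJoint (hpX : IsPmf pX) (hW1 : IsChan W1) (hW2 : IsChan W2) (hp1 : IsChan p1)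
    (hp2 : IsChan p2) :
    Isum (ceoJoint pX W1 W2 p1 p2) =
      I1c (ceoJoint pX W1 W2 p1 p2) + I2m (ceoJoint pX W1 W2 p1 p2) := by
  set J := ceoJoint pX W1 W2 p1 p2
  have hmass : ∑ y1, ∑ y2, mY12 J (y1, y2) = 1 := by
    rw [sum_sum_mY12, (isPmf_ceoJoint hpX hW1 hW2 hp1 hp2).2]
  have hY12U : ent (mY12U J) = ent (mY12 J) + (condEnt (mY1 J) p1 + condEnt (mY2 J) p2) := by
    calc ent (mY12U J)
        = ent fun z : (Y1 × Y2) × U1 × U2 => mY12 J z.1 * (p1 z.1.1 z.2.1 * p2 z.1.2 z.2.2) := by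
          rw [← ent_comp_equiv (Equiv.prodAssoc Y1 Y2 (U1 × U2))]
          exact congrArg ent (funext fun z => mY12U_ceoJoint hp1 hp2 z.1 z.2)
      _ = ent (mY12 J) + (condEnt (mY1 J) p1 + condEnt (mY2 J) p2) := by
          rw [ent_chain_rule _ fun y : Y1 × Y2 => (hp1 y.1).mul (hp2 y.2), condEnt_mul _ hp1 hp2]
          simp only [sum_mY12_right, sum_mY12_left]
  rw [Isum, hmass, negMulLog_one, hY12U, I1c_ceoJoint hp1, I2m_ceoJoint hp2]
  ring

lemma I1c_le_I1m (hpX : IsPmf pX) (hW1 : IsChan W1) (hW2 : IsChan W2) (hp1 : IsChan p1)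
    (hp2 : IsChan p2) :
    I1c (ceoJoint pX W1 W2 p1 p2) ≤ I1m (ceoJoint pX W1 W2 p1 p2) := by
  rw [I1m_eq_I1c_add_IU12 hp1]
  exact le_add_of_nonneg_right (IU12_nonneg (isPmf_ceoJoint hpX hW1 hW2 hp1 hp2))

lemma I2c_le_I2m (hpX : IsPmf pX) (hW1 : IsChan W1) (hW2 : IsChan W2) (hp1 : IsChan p1)
    (hp2 : IsChan p2) :
    I2c (ceoJoint pX W1 W2 p1 p2) ≤ I2m (ceoJoint pX W1 W2 p1 p2) := by
  rw [I2m_eq_I2c_add_IU12 hp2]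
  exact le_add_of_nonneg_right (IU12_nonneg (isPmf_ceoJoint hpX hW1 hW2 hp1 hp2))

end CeoJoint

section TimeSharing

section Homogeneity

variable (c : ℝ) (j : X × Y1 × Y2 × U1 × U2 → ℝ)

omit [Fintype X] [Fintype U1] [Fintype U2] in
lemma mXU_smul : mXU (c • j) = c • mXU j := by
  funext z
  simp only [mXU, Pi.smul_apply, smul_eq_mul, mul_sum]

omit [Fintype U1] [Fintype U2] in
lemma mU12_smul : mU12 (c • j) = c • mU12 j := by
  funext u
  simp only [mU12, mXU_smul, Pi.smul_apply, smul_eq_mul, mul_sum]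

lemma condHX_smul : condHX (c • j) = c * condHX j := by
  have hmass : ∑ u, mU12 j u = ∑ z, mXU j z := by
    rw [Fintype.sum_prod_type (mXU j)]
    exact sum_comm
  rw [condHX, mXU_smul, mU12_smul, ent_smul, ent_smul, hmass, condHX]
  ring

lemma I1c_smul : I1c (c • j) = c * I1c j := by
  have hU2 : mU2 (c • j) = c • mU2 j := by
    funext u2
    simp only [mU2, mU12_smul, Pi.smul_apply, smul_eq_mul, mul_sum]
  have hY1U : mY1U (c • j) = c • mY1U j := by
    funext z
    simp only [mY1U, Pi.smul_apply, smul_eq_mul, mul_sum]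
  have hY1U2 : mY1U2 (c • j) = c • mY1U2 j := by
    funext z
    simp only [mY1U2, hY1U, Pi.smul_apply, smul_eq_mul, mul_sum]
  have hmassU : ∑ u2, mU2 j u2 = ∑ u, mU12 j u := (Fintype.sum_prod_type_right _).symm
  have hmassY1U : ∑ z, mY1U2 j z = ∑ z, mY1U j z := by
    simp only [mY1U2, Fintype.sum_prod_type, sum_comm (s := univ (α := U1)) (t := univ (α := U2))]
  simp only [I1c, hU2, hY1U, hY1U2, mU12_smul, ent_smul, hmassU, hmassY1U]
  ring

lemma I2c_smul : I2c (c • j) = c * I2c j := by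
  rw [← I1c_swapSources, ← I1c_swapSources]
  exact I1c_smul c (swapSources j)

lemma Isum_smul : Isum (c • j) = c * Isum j := by
  have hY12 : mY12 (c • j) = c • mY12 j := by
    funext z
    simp only [mY12, Pi.smul_apply, smul_eq_mul, mul_sum]
  have hY12U : mY12U (c • j) = c • mY12U j := by
    funext z
    simp only [mY12U, Pi.smul_apply, smul_eq_mul, mul_sum]
  simp only [Isum, hY12, hY12U, mU12_smul, ent_smul, Pi.smul_apply, smul_eq_mul, ← mul_sum,
    negMulLog_mul, Fintype.sum_prod_type (mY12 j), sum_mU12, sum_mY12U]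
  ring

end Homogeneity

section Slices

variable (j : Qt × X × Y1 × Y2 × U1 × U2 → ℝ)

lemma ent_mqU12 : ent (mqU12 j) = ∑ q, ent (mU12 fun z => j (q, z)) :=
  ent_eq_sum_ent (Equiv.prodAssoc U1 U2 Qt) (mqU12 j)

lemma HXQ_eq_sum : HXQ j = ∑ q, condHX fun z => j (q, z) := by
  have hXU : ent (mqXU12 j) = ∑ q, ent (mXU fun z => j (q, z)) :=
    ent_eq_sum_ent ((Equiv.prodAssoc X (U1 × U2) Qt).trans
      ((Equiv.refl X).prodCongr (Equiv.prodAssoc U1 U2 Qt))) (mqXU12 j)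
  simp only [HXQ, condHX, hXU, ent_mqU12, sum_sub_distrib]

lemma IQ1_eq_sum : IQ1 j = ∑ q, I1c fun z => j (q, z) := by
  have hU2 : ent (mqU2 j) = ∑ q, ent (mU2 fun z => j (q, z)) :=
    ent_eq_sum_ent (Equiv.refl (U2 × Qt)) (mqU2 j)
  have hY1U : ent (mqY1U12 j) = ∑ q, ent (mY1U fun z => j (q, z)) :=
    ent_eq_sum_ent ((Equiv.prodAssoc Y1 (U1 × U2) Qt).trans
      ((Equiv.refl Y1).prodCongr (Equiv.prodAssoc U1 U2 Qt))) (mqY1U12 j)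
  have hY1U2 : ent (mqY1U2 j) = ∑ q, ent (mY1U2 fun z => j (q, z)) := by
    rw [ent_eq_sum_ent (Equiv.prodAssoc Y1 U2 Qt)]
    refine sum_congr rfl fun q _ => congrArg ent (funext fun z => ?_)
    exact (sum_congr rfl fun _ _ => sum_comm).trans sum_comm
  simp only [IQ1, I1c, hU2, hY1U, hY1U2, ent_mqU12, sum_sub_distrib, sum_add_distrib]

lemma IQ2_eq_sum : IQ2 j = ∑ q, I2c fun z => j (q, z) := by
  have hU1 : ent (mqU1 j) = ∑ q, ent (mU1 fun z => j (q, z)) :=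
    ent_eq_sum_ent (Equiv.refl (U1 × Qt)) (mqU1 j)
  have hY2U : ent (mqY2U12 j) = ∑ q, ent (mY2U fun z => j (q, z)) :=
    ent_eq_sum_ent ((Equiv.prodAssoc Y2 (U1 × U2) Qt).trans
      ((Equiv.refl Y2).prodCongr (Equiv.prodAssoc U1 U2 Qt))) (mqY2U12 j)
  have hY2U1 : ent (mqY2U1 j) = ∑ q, ent (mY2U1 fun z => j (q, z)) := by
    rw [ent_eq_sum_ent (Equiv.prodAssoc Y2 U1 Qt)]
    refine sum_congr rfl fun q _ => congrArg ent (funext fun z => ?_)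
    exact (sum_congr rfl fun _ _ => sum_comm).trans sum_comm
  simp only [IQ2, I2c, hU1, hY2U, hY2U1, ent_mqU12, sum_sub_distrib, sum_add_distrib]

lemma IQsum_eq_sum : IQsum j = ∑ q, Isum fun z => j (q, z) := by
  have hY12 : ent (mqY12 j) = ∑ q, ent (mY12 fun z => j (q, z)) :=
    ent_eq_sum_ent (Equiv.prodAssoc Y1 Y2 Qt) (mqY12 j)
  have hY12U : ent (mqY12U12 j) = ∑ q, ent (mY12U fun z => j (q, z)) :=
    ent_eq_sum_ent ((Equiv.prodAssoc Y1 (Y2 × U1 × U2) Qt).trans ((Equiv.refl Y1).prodCongr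
      ((Equiv.prodAssoc Y2 (U1 × U2) Qt).trans
        ((Equiv.refl Y2).prodCongr (Equiv.prodAssoc U1 U2 Qt))))) (mqY12U12 j)
  simp only [IQsum, Isum, hY12, hY12U, ent_mqU12, sum_sub_distrib, sum_add_distrib]
  rfl

end Slices

variable (pQ : Qt → ℝ) {pX : X → ℝ} {W1 : X → Y1 → ℝ} {W2 : X → Y2 → ℝ}
  (c1 : Qt → Y1 → U1 → ℝ) (c2 : Qt → Y2 → U2 → ℝ)

lemma ceoJointQ_slice {Qt X Y1 Y2 U1 U2 : Type} (pQ : Qt → ℝ) (pX : X → ℝ) (W1 : X → Y1 → ℝ)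
    (W2 : X → Y2 → ℝ) (c1 : Qt → Y1 → U1 → ℝ) (c2 : Qt → Y2 → U2 → ℝ) (q : Qt) :
    (fun z => ceoJointQ pQ pX W1 W2 c1 c2 (q, z)) =
      pQ q • ceoJoint pX W1 W2 (c1 q) (c2 q) := by
  funext z
  simp only [ceoJointQ, ceoJoint, Pi.smul_apply, smul_eq_mul, mul_assoc]

lemma HXQ_ceoJointQ : HXQ (ceoJointQ pQ pX W1 W2 c1 c2) =
    ∑ q, pQ q * condHX (ceoJoint pX W1 W2 (c1 q) (c2 q)) := by
  simp only [HXQ_eq_sum, ceoJointQ_slice, condHX_smul]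

lemma IQ1_ceoJointQ : IQ1 (ceoJointQ pQ pX W1 W2 c1 c2) =
    ∑ q, pQ q * I1c (ceoJoint pX W1 W2 (c1 q) (c2 q)) := by
  simp only [IQ1_eq_sum, ceoJointQ_slice, I1c_smul]

lemma IQ2_ceoJointQ : IQ2 (ceoJointQ pQ pX W1 W2 c1 c2) =
    ∑ q, pQ q * I2c (ceoJoint pX W1 W2 (c1 q) (c2 q)) := by
  simp only [IQ2_eq_sum, ceoJointQ_slice, I2c_smul]

variable {c1 c2}

lemma IQsum_ceoJointQ (hpX : IsPmf pX) (hW1 : IsChan W1) (hW2 : IsChan W2)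
    (hc1 : ∀ q, IsChan (c1 q)) (hc2 : ∀ q, IsChan (c2 q)) :
    IQsum (ceoJointQ pQ pX W1 W2 c1 c2) = ∑ q, pQ q *
      (I1c (ceoJoint pX W1 W2 (c1 q) (c2 q)) + I2m (ceoJoint pX W1 W2 (c1 q) (c2 q))) := by
  simp only [IQsum_eq_sum, ceoJointQ_slice, Isum_smul,
    Isum_ceoJoint hpX hW1 hW2 (hc1 _) (hc2 _)]

end TimeSharing

section Feasibility

variable {pX : X → ℝ} {W1 : X → Y1 → ℝ} {W2 : X → Y2 → ℝ}

lemma I1m_ceoJoint_const (hpX : IsPmf pX) (hW1 : IsChan W1) (hW2 : IsChan W2) {v : U1 → ℝ}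
    (hv : IsPmf v) {p2 : Y2 → U2 → ℝ} (hp2 : IsChan p2) :
    I1m (ceoJoint pX W1 W2 (fun _ => v) p2) = 0 := by
  set J := ceoJoint pX W1 W2 (fun _ => v) p2
  have hmass : ∑ y1, mY1 J y1 = 1 := by
    simp only [← sum_mY12_right]
    rw [sum_sum_mY12, (isPmf_ceoJoint hpX hW1 hW2 (fun _ => hv) hp2).2]
  have hU1 : mU1 J = v := by
    funext u1
    rw [← sum_mY1U1]
    simp only [J, mY1U1_ceoJoint fun _ => hv]
    rw [← sum_mul, hmass, one_mul]
  rw [I1m_ceoJoint fun _ => hv, hU1, condEnt, ← sum_mul, hmass, one_mul, sub_self]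

lemma I2m_ceoJoint_const (hpX : IsPmf pX) (hW1 : IsChan W1) (hW2 : IsChan W2) {v : U2 → ℝ}
    (hv : IsPmf v) {p1 : Y1 → U1 → ℝ} (hp1 : IsChan p1) :
    I2m (ceoJoint pX W1 W2 p1 fun _ => v) = 0 := by
  rw [← I1m_swapSources, swapSources_ceoJoint, I1m_ceoJoint_const hpX hW2 hW1 hv hp1]

@[fun_prop]
lemma continuous_condHX : Continuous (condHX : (X × Y1 × Y2 × U1 × U2 → ℝ) → ℝ) := by
  unfold condHX mU12 mXU
  fun_prop

@[fun_prop]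
lemma continuous_I1c : Continuous (I1c : (X × Y1 × Y2 × U1 × U2 → ℝ) → ℝ) := by
  unfold I1c mY1U2 mY1U mU2 mU12 mXU
  fun_prop

@[fun_prop]
lemma continuous_I2m : Continuous (I2m : (X × Y1 × Y2 × U1 × U2 → ℝ) → ℝ) := by
  unfold I2m mY2 mY2U2 mU2 mU12 mXU
  fun_prop

@[fun_prop]
lemma continuous_ceoJoint {X Y1 Y2 U1 U2 : Type} (pX : X → ℝ) (W1 : X → Y1 → ℝ)
    (W2 : X → Y2 → ℝ) : Continuous fun P : (Y1 → U1 → ℝ) × (Y2 → U2 → ℝ) =>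
      ceoJoint pX W1 W2 P.1 P.2 := by
  unfold ceoJoint
  fun_prop

variable (pX W1 W2) in
lemma isCompact_feasible₁ (R1 R2 : ℝ) :
    IsCompact {P : (Y1 → U1 → ℝ) × (Y2 → U2 → ℝ) | IsChan P.1 ∧ IsChan P.2 ∧
      I1c (ceoJoint pX W1 W2 P.1 P.2) ≤ R1 ∧ I2m (ceoJoint pX W1 W2 P.1 P.2) ≤ R2} := by
  have hrates : IsClosed {P : (Y1 → U1 → ℝ) × (Y2 → U2 → ℝ) |
      I1c (ceoJoint pX W1 W2 P.1 P.2) ≤ R1 ∧ I2m (ceoJoint pX W1 W2 P.1 P.2) ≤ R2} := by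
    rw [Set.ofPred_and]
    exact (isClosed_le (by fun_prop) (by fun_prop)).inter
      (isClosed_le (by fun_prop) (by fun_prop))
  convert (isCompact_setOf_isChan.prod isCompact_setOf_isChan).inter_right hrates using 1
  ext P
  simp only [Set.mem_ofPred_eq, Set.mem_inter_iff, Set.mem_prod, and_assoc]

lemma nonempty_feasible₁ [Nonempty U1] [Nonempty U2] (hpX : IsPmf pX) (hW1 : IsChan W1)
    (hW2 : IsChan W2) {R1 R2 : ℝ} (hR1 : 0 ≤ R1) (hR2 : 0 ≤ R2) :
    {P : (Y1 → U1 → ℝ) × (Y2 → U2 → ℝ) | IsChan P.1 ∧ IsChan P.2 ∧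
      I1c (ceoJoint pX W1 W2 P.1 P.2) ≤ R1 ∧
      I2m (ceoJoint pX W1 W2 P.1 P.2) ≤ R2}.Nonempty := by
  obtain ⟨v1, hv1⟩ := exists_isPmf U1
  obtain ⟨v2, hv2⟩ := exists_isPmf U2
  refine ⟨(fun _ => v1, fun _ => v2), fun _ => hv1, fun _ => hv2, ?_, ?_⟩
  · calc _ ≤ I1m (ceoJoint pX W1 W2 (fun _ => v1) fun _ => v2) :=
        I1c_le_I1m hpX hW1 hW2 (fun _ => hv1) fun _ => hv2
      _ ≤ R1 := (I1m_ceoJoint_const hpX hW1 hW2 hv1 fun _ => hv2).trans_le hR1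
  · exact (I2m_ceoJoint_const hpX hW1 hW2 hv2 fun _ => hv1).trans_le hR2

lemma Dceo1_le_iff [Nonempty U1] [Nonempty U2] (hpX : IsPmf pX) (hW1 : IsChan W1)
    (hW2 : IsChan W2) {R1 R2 D : ℝ} (hR1 : 0 ≤ R1) (hR2 : 0 ≤ R2) :
    Dceo1 U1 U2 pX W1 W2 R1 R2 ≤ D ↔
      ∃ p1 : Y1 → U1 → ℝ, ∃ p2 : Y2 → U2 → ℝ, IsChan p1 ∧ IsChan p2 ∧
        I1c (ceoJoint pX W1 W2 p1 p2) ≤ R1 ∧ I2m (ceoJoint pX W1 W2 p1 p2) ≤ R2 ∧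
        condHX (ceoJoint pX W1 W2 p1 p2) ≤ D := by
  have hD : Dceo1 U1 U2 pX W1 W2 R1 R2 = sInf ((fun P => condHX (ceoJoint pX W1 W2 P.1 P.2)) ''
      {P : (Y1 → U1 → ℝ) × (Y2 → U2 → ℝ) | IsChan P.1 ∧ IsChan P.2 ∧
        I1c (ceoJoint pX W1 W2 P.1 P.2) ≤ R1 ∧ I2m (ceoJoint pX W1 W2 P.1 P.2) ≤ R2}) := by
    rw [Dceo1]
    congr 1
    ext d
    simp [and_assoc, eq_comm]
  have hcompact := (isCompact_feasible₁ (U1 := U1) (U2 := U2) pX W1 W2 R1 R2).image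
    (f := fun P => condHX (ceoJoint pX W1 W2 P.1 P.2)) (by fun_prop)
  rw [hD]
  constructor
  · intro h
    obtain ⟨P, ⟨hp1, hp2, h1, h2⟩, hmin⟩ :=
      hcompact.sInf_mem ((nonempty_feasible₁ hpX hW1 hW2 hR1 hR2).image _)
    exact ⟨P.1, P.2, hp1, hp2, h1, h2, hmin.trans_le h⟩
  · rintro ⟨p1, p2, hp1, hp2, h1, h2, h⟩
    exact (csInf_le hcompact.bddBelow ⟨(p1, p2), ⟨hp1, hp2, h1, h2⟩, rfl⟩).trans h

variable (pX W1 W2) in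
lemma Dceo2_eq_Dceo1 (V1 V2 : Type) [Fintype V1] [Fintype V2] (R1 R2 : ℝ) :
    Dceo2 V1 V2 pX W1 W2 R1 R2 = Dceo1 V2 V1 pX W2 W1 R2 R1 := by
  have hset (d : ℝ) : (∃ p1 : Y1 → V1 → ℝ, ∃ p2 : Y2 → V2 → ℝ, IsChan p1 ∧ IsChan p2 ∧
      I2c (ceoJoint pX W1 W2 p1 p2) ≤ R2 ∧ I1m (ceoJoint pX W1 W2 p1 p2) ≤ R1 ∧
      d = condHX (ceoJoint pX W1 W2 p1 p2)) ↔
      ∃ p2 : Y2 → V2 → ℝ, ∃ p1 : Y1 → V1 → ℝ, IsChan p2 ∧ IsChan p1 ∧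
      I1c (ceoJoint pX W2 W1 p2 p1) ≤ R2 ∧ I2m (ceoJoint pX W2 W1 p2 p1) ≤ R1 ∧
      d = condHX (ceoJoint pX W2 W1 p2 p1) := by
    simp only [← swapSources_ceoJoint pX W1 W2, I1c_swapSources, I2m_swapSources,
      condHX_swapSources]
    rw [exists_comm]
    simp only [and_left_comm]
  simp only [Dceo2, Dceo1, hset]

end Feasibility

section Convexity

variable {E : Type*} [AddCommGroup E] [Module ℝ E]

open scoped Pointwise in
lemma isUpperSet_convexHull [PartialOrder E] [IsOrderedAddMonoid E] [PosSMulMono ℝ E]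
    {s : Set E} (hs : IsUpperSet s) : IsUpperSet (convexHull ℝ s) := by
  have hadd : s + Set.Ici 0 = s := by
    refine Set.Subset.antisymm ?_ fun x hx => ⟨x, hx, 0, Set.self_mem_Ici, add_zero x⟩
    rintro _ ⟨x, hx, v, hv, rfl⟩
    exact hs (le_add_of_nonneg_right hv) hx
  rw [← hadd, convexHull_add, (convex_Ici (𝕜 := ℝ) (0 : E)).convexHull_eq]
  exact (isUpperSet_Ici 0).add_left

lemma exists_fin_sum_smul_of_mem_convexHull [FiniteDimensional ℝ E] {s : Set E} {x : E}
    (hx : x ∈ convexHull ℝ s) :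
    ∃ m ≤ Module.finrank ℝ E + 1, ∃ (w : Fin m → ℝ) (z : Fin m → E),
      IsPmf w ∧ (∀ q, z q ∈ s) ∧ ∑ q, w q • z q = x := by
  obtain ⟨ι, _, z, w, hzs, hind, hw, hw1, hwz⟩ := eq_pos_convex_span_of_mem_convexHull hx
  let e := (Fintype.equivFin ι).symm
  exact ⟨Fintype.card ι, hind.card_le_finrank_succ.trans
      (Nat.add_le_add_right (Submodule.finrank_le _) 1), w ∘ e, z ∘ e,
    ⟨fun _ => (hw _).le, (e.sum_comp w).trans hw1⟩, fun _ => hzs ⟨_, rfl⟩,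
    (e.sum_comp fun i => w i • z i).trans hwz⟩

lemma exists_mem_segment_le {A B r : ℝ × ℝ × ℝ} (hAB : A.1 + A.2.1 = B.1 + B.2.1)
    (hAB' : A.2.2 = B.2.2) (hA : A.1 ≤ r.1) (hB : B.2.1 ≤ r.2.1)
    (hsum : A.1 + A.2.1 ≤ r.1 + r.2.1) (hD : A.2.2 ≤ r.2.2) : ∃ z ∈ segment ℝ A B, z ≤ r := by
  rcases le_or_gt B.1 r.1 with hB1 | hB1
  · exact ⟨B, right_mem_segment ℝ A B, hB1, hB, hAB' ▸ hD⟩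
  · obtain ⟨a, b, ha, hb, hab, hr⟩ : r.1 ∈ segment ℝ A.1 B.1 := by
      rw [segment_eq_Icc (hA.trans hB1.le)]
      exact ⟨hA, hB1.le⟩
    refine ⟨a • A + b • B, ⟨a, b, ha, hb, hab, rfl⟩, hr.le, ?_, ?_⟩ <;>
      simp only [smul_eq_mul, Prod.snd_add, Prod.fst_add, Prod.smul_snd, Prod.smul_fst] at hr ⊢
    · have : a * A.2.1 + b * B.2.1 = A.1 + A.2.1 - r.1 := by
        linear_combination (A.1 + A.2.1) * hab - b * hAB - hr
      linarith
    · rwa [← hAB', ← add_mul, hab, one_mul]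

end Convexity

section Regions

/-- The rate-distortion region `RD_CEO` for auxiliary alphabets `V1`, `V2` and time-sharing
alphabets of size at most `N`. -/
def RDceo (N : ℕ) (V1 V2 : Type) [Fintype V1] [Fintype V2]
    (pX : X → ℝ) (W1 : X → Y1 → ℝ) (W2 : X → Y2 → ℝ) : Set (ℝ × ℝ × ℝ) :=
  {r | ∃ m : ℕ, m ≤ N ∧
    ∃ pQ : Fin m → ℝ, ∃ c1 : Fin m → Y1 → V1 → ℝ, ∃ c2 : Fin m → Y2 → V2 → ℝ,
      IsPmf pQ ∧ (∀ q, IsChan (c1 q)) ∧ (∀ q, IsChan (c2 q)) ∧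
      IQ1 (ceoJointQ pQ pX W1 W2 c1 c2) ≤ r.1 ∧
      IQ2 (ceoJointQ pQ pX W1 W2 c1 c2) ≤ r.2.1 ∧
      IQsum (ceoJointQ pQ pX W1 W2 c1 c2) ≤ r.1 + r.2.1 ∧
      HXQ (ceoJointQ pQ pX W1 W2 c1 c2) ≤ r.2.2}

/-- The region `RD¹_CEO`, the epigraph of `D¹_CEO` over the nonnegative rate pairs. -/
def RDceo1 (V1 V2 : Type) [Fintype V1] [Fintype V2]
    (pX : X → ℝ) (W1 : X → Y1 → ℝ) (W2 : X → Y2 → ℝ) : Set (ℝ × ℝ × ℝ) :=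
  {r | 0 ≤ r.1 ∧ 0 ≤ r.2.1 ∧ Dceo1 V1 V2 pX W1 W2 r.1 r.2.1 ≤ r.2.2}

/-- The region `RD²_CEO`, the epigraph of `D²_CEO` over the nonnegative rate pairs. -/
def RDceo2 (V1 V2 : Type) [Fintype V1] [Fintype V2]
    (pX : X → ℝ) (W1 : X → Y1 → ℝ) (W2 : X → Y2 → ℝ) : Set (ℝ × ℝ × ℝ) :=
  {r | 0 ≤ r.1 ∧ 0 ≤ r.2.1 ∧ Dceo2 V1 V2 pX W1 W2 r.1 r.2.1 ≤ r.2.2}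

/-- The rate-distortion triple `(I(Y₁;U₁|U₂), I(Y₂;U₂), H(X|U₁,U₂))`: encoder 2 is decoded first
and serves as side information for encoder 1. -/
def cornerPoint₁ (j : X × Y1 × Y2 × U1 × U2 → ℝ) : ℝ × ℝ × ℝ := (I1c j, I2m j, condHX j)

/-- The rate-distortion triple `(I(Y₁;U₁), I(Y₂;U₂|U₁), H(X|U₁,U₂))`: encoder 1 is decoded first
and serves as side information for encoder 2. -/
def cornerPoint₂ (j : X × Y1 × Y2 × U1 × U2 → ℝ) : ℝ × ℝ × ℝ := (I1m j, I2c j, condHX j)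

variable {pX : X → ℝ} {W1 : X → Y1 → ℝ} {W2 : X → Y2 → ℝ}

lemma mem_RDceo1_iff [Nonempty U1] [Nonempty U2] (hpX : IsPmf pX) (hW1 : IsChan W1)
    (hW2 : IsChan W2) {r : ℝ × ℝ × ℝ} :
    r ∈ RDceo1 U1 U2 pX W1 W2 ↔ ∃ (p1 : Y1 → U1 → ℝ) (p2 : Y2 → U2 → ℝ),
      IsChan p1 ∧ IsChan p2 ∧ cornerPoint₁ (ceoJoint pX W1 W2 p1 p2) ≤ r := by
  constructor
  · rintro ⟨hR1, hR2, hD⟩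
    exact (Dceo1_le_iff hpX hW1 hW2 hR1 hR2).1 hD
  · rintro ⟨p1, p2, hp1, hp2, hle⟩
    have hj := ceoJoint_nonneg hpX hW1 hW2 hp1 hp2
    have hR1 : 0 ≤ r.1 := (I1c_nonneg hj).trans hle.1
    have hR2 : 0 ≤ r.2.1 :=
      (I2c_nonneg hj).trans ((I2c_le_I2m hpX hW1 hW2 hp1 hp2).trans hle.2.1)
    exact ⟨hR1, hR2, (Dceo1_le_iff hpX hW1 hW2 hR1 hR2).2 ⟨p1, p2, hp1, hp2, hle⟩⟩

lemma mem_RDceo2_iff [Nonempty U1] [Nonempty U2] (hpX : IsPmf pX) (hW1 : IsChan W1)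
    (hW2 : IsChan W2) {r : ℝ × ℝ × ℝ} :
    r ∈ RDceo2 U1 U2 pX W1 W2 ↔ ∃ (p1 : Y1 → U1 → ℝ) (p2 : Y2 → U2 → ℝ),
      IsChan p1 ∧ IsChan p2 ∧ cornerPoint₂ (ceoJoint pX W1 W2 p1 p2) ≤ r := by
  calc r ∈ RDceo2 U1 U2 pX W1 W2
      ↔ (r.2.1, r.1, r.2.2) ∈ RDceo1 U2 U1 pX W2 W1 := by
        simp only [RDceo1, RDceo2, Set.mem_ofPred_eq, Dceo2_eq_Dceo1, and_left_comm]
    _ ↔ _ := by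
        simp only [mem_RDceo1_iff hpX hW2 hW1, cornerPoint₁, cornerPoint₂, Prod.le_def,
          ← swapSources_ceoJoint pX W1 W2, I1c_swapSources, I2m_swapSources, condHX_swapSources]
        rw [exists_comm]
        simp only [and_left_comm]

lemma isUpperSet_RDceo1_union_RDceo2 [Nonempty U1] [Nonempty U2] (hpX : IsPmf pX)
    (hW1 : IsChan W1) (hW2 : IsChan W2) :
    IsUpperSet (RDceo1 U1 U2 pX W1 W2 ∪ RDceo2 U1 U2 pX W1 W2) := by
  refine IsUpperSet.union (fun r s hrs => ?_) fun r s hrs => ?_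
  · simp only [mem_RDceo1_iff hpX hW1 hW2]
    rintro ⟨p1, p2, hp1, hp2, hle⟩
    exact ⟨p1, p2, hp1, hp2, hle.trans hrs⟩
  · simp only [mem_RDceo2_iff hpX hW1 hW2]
    rintro ⟨p1, p2, hp1, hp2, hle⟩
    exact ⟨p1, p2, hp1, hp2, hle.trans hrs⟩

lemma I1c_add_I2m_eq {p1 : Y1 → U1 → ℝ} {p2 : Y2 → U2 → ℝ} (hp1 : IsChan p1) (hp2 : IsChan p2) :
    I1c (ceoJoint pX W1 W2 p1 p2) + I2m (ceoJoint pX W1 W2 p1 p2) =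
      I1m (ceoJoint pX W1 W2 p1 p2) + I2c (ceoJoint pX W1 W2 p1 p2) := by
  rw [I1m_eq_I1c_add_IU12 hp1, I2m_eq_I2c_add_IU12 hp2]
  ring

lemma exists_channels_of_mem_union [Nonempty U1] [Nonempty U2] (hpX : IsPmf pX)
    (hW1 : IsChan W1) (hW2 : IsChan W2) {r : ℝ × ℝ × ℝ}
    (hr : r ∈ RDceo1 U1 U2 pX W1 W2 ∪ RDceo2 U1 U2 pX W1 W2) :
    ∃ (p1 : Y1 → U1 → ℝ) (p2 : Y2 → U2 → ℝ), IsChan p1 ∧ IsChan p2 ∧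
      I1c (ceoJoint pX W1 W2 p1 p2) ≤ r.1 ∧ I2c (ceoJoint pX W1 W2 p1 p2) ≤ r.2.1 ∧
      I1c (ceoJoint pX W1 W2 p1 p2) + I2m (ceoJoint pX W1 W2 p1 p2) ≤ r.1 + r.2.1 ∧
      condHX (ceoJoint pX W1 W2 p1 p2) ≤ r.2.2 := by
  rw [Set.mem_union, mem_RDceo1_iff hpX hW1 hW2, mem_RDceo2_iff hpX hW1 hW2] at hr
  rcases hr with ⟨p1, p2, hp1, hp2, h1, h2, hD⟩ | ⟨p1, p2, hp1, hp2, h1, h2, hD⟩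
  · exact ⟨p1, p2, hp1, hp2, h1, (I2c_le_I2m hpX hW1 hW2 hp1 hp2).trans h2,
      add_le_add h1 h2, hD⟩
  · exact ⟨p1, p2, hp1, hp2, (I1c_le_I1m hpX hW1 hW2 hp1 hp2).trans h1, h2,
      (I1c_add_I2m_eq hp1 hp2).trans_le (add_le_add h1 h2), hD⟩

lemma convexHull_subset_RDceo [Nonempty U1] [Nonempty U2] {N : ℕ} (hN : 4 ≤ N) (hpX : IsPmf pX)
    (hW1 : IsChan W1) (hW2 : IsChan W2) :
    convexHull ℝ (RDceo1 U1 U2 pX W1 W2 ∪ RDceo2 U1 U2 pX W1 W2) ⊆ RDceo N U1 U2 pX W1 W2 := by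
  intro r hr
  obtain ⟨m, hm, w, z, hw, hz, rfl⟩ := exists_fin_sum_smul_of_mem_convexHull hr
  have hdim : Module.finrank ℝ (ℝ × ℝ × ℝ) = 3 := by simp
  choose c1 c2 hc1 hc2 hR1 hR2 hsum hD using
    fun q => exists_channels_of_mem_union hpX hW1 hW2 (hz q)
  have mono {f g : Fin m → ℝ} (hfg : ∀ q, f q ≤ g q) : ∑ q, w q * f q ≤ ∑ q, w q * g q :=
    sum_le_sum fun q _ => mul_le_mul_of_nonneg_left (hfg q) (hw.1 q)
  refine ⟨m, (hm.trans_eq (by rw [hdim])).trans hN, w, c1, c2, hw, hc1, hc2, ?_⟩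
  rw [IQ1_ceoJointQ, IQ2_ceoJointQ, IQsum_ceoJointQ w hpX hW1 hW2 hc1 hc2, HXQ_ceoJointQ]
  simp only [Prod.fst_sum, Prod.snd_sum, Prod.smul_fst, Prod.smul_snd, smul_eq_mul,
    ← sum_add_distrib, ← mul_add]
  exact ⟨mono hR1, mono hR2, mono hsum, mono hD⟩

lemma RDceo_subset_convexHull [Nonempty U1] [Nonempty U2] (N : ℕ) (hpX : IsPmf pX)
    (hW1 : IsChan W1) (hW2 : IsChan W2) :
    RDceo N U1 U2 pX W1 W2 ⊆ convexHull ℝ (RDceo1 U1 U2 pX W1 W2 ∪ RDceo2 U1 U2 pX W1 W2) := by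
  rintro r ⟨m, -, pQ, c1, c2, hpQ, hc1, hc2, hR1, hR2, hsum, hD⟩
  set K := convexHull ℝ (RDceo1 U1 U2 pX W1 W2 ∪ RDceo2 U1 U2 pX W1 W2)
  let J (q : Fin m) := ceoJoint pX W1 W2 (c1 q) (c2 q)
  have hK : Convex ℝ K := convex_convexHull ℝ _
  have hA : ∑ q, pQ q • cornerPoint₁ (J q) ∈ K :=
    hK.sum_mem (fun q _ => hpQ.1 q) hpQ.2 fun q _ => subset_convexHull ℝ _ <|
      Or.inl <| (mem_RDceo1_iff hpX hW1 hW2).2 ⟨c1 q, c2 q, hc1 q, hc2 q, le_rfl⟩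
  have hB : ∑ q, pQ q • cornerPoint₂ (J q) ∈ K :=
    hK.sum_mem (fun q _ => hpQ.1 q) hpQ.2 fun q _ => subset_convexHull ℝ _ <|
      Or.inr <| (mem_RDceo2_iff hpX hW1 hW2).2 ⟨c1 q, c2 q, hc1 q, hc2 q, le_rfl⟩
  rw [IQ1_ceoJointQ] at hR1
  rw [IQ2_ceoJointQ] at hR2
  rw [IQsum_ceoJointQ pQ hpX hW1 hW2 hc1 hc2] at hsum
  rw [HXQ_ceoJointQ] at hD
  obtain ⟨z, hz, hzr⟩ : ∃ z ∈ segment ℝ (∑ q, pQ q • cornerPoint₁ (J q))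
      (∑ q, pQ q • cornerPoint₂ (J q)), z ≤ r := by
    apply exists_mem_segment_le <;>
      simp only [cornerPoint₁, cornerPoint₂, Prod.fst_sum, Prod.snd_sum, Prod.smul_fst,
        Prod.smul_snd, smul_eq_mul, ← sum_add_distrib, ← mul_add]
    · simp only [J, I1c_add_I2m_eq (hc1 _) (hc2 _)]
    · exact hR1
    · exact hR2
    · exact hsum
    · exact hD
  exact isUpperSet_convexHull (isUpperSet_RDceo1_union_RDceo2 hpX hW1 hW2) hzr
    (hK.segment_subset hA hB hz)

theorem ceo_region_decomposition_general [Nonempty U1] [Nonempty U2] {N : ℕ} (hN : 4 ≤ N)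
    (hpX : IsPmf pX) (hW1 : IsChan W1) (hW2 : IsChan W2) :
    RDceo N U1 U2 pX W1 W2 =
      convexHull ℝ (RDceo1 U1 U2 pX W1 W2 ∪ RDceo2 U1 U2 pX W1 W2) :=
  (RDceo_subset_convexHull N hpX hW1 hW2).antisymm (convexHull_subset_RDceo hN hpX hW1 hW2)

end Regions

/-- **Proposition 1** (CEO region decomposition): `RD_CEO = conv(RD¹_CEO ∪ RD²_CEO)`.
Here the auxiliary alphabets are `𝒰₁ = 𝒴₁` and `𝒰₂ = 𝒴₂` (so that `|𝒰ᵢ| = |𝒴ᵢ|`),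
and the time-sharing alphabet is `Fin m` with `m ≤ 4`. -/
theorem ceo_region_decomposition
    (pX : X → ℝ) (W1 : X → Y1 → ℝ) (W2 : X → Y2 → ℝ)
    (hpX : IsPmf pX) (hW1 : IsChan W1) (hW2 : IsChan W2) :
    {r : ℝ × ℝ × ℝ | ∃ m : ℕ, m ≤ 4 ∧
      ∃ pQ : Fin m → ℝ, ∃ c1 : Fin m → Y1 → Y1 → ℝ, ∃ c2 : Fin m → Y2 → Y2 → ℝ,
        IsPmf pQ ∧ (∀ q, IsChan (c1 q)) ∧ (∀ q, IsChan (c2 q)) ∧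
        IQ1 (ceoJointQ pQ pX W1 W2 c1 c2) ≤ r.1 ∧
        IQ2 (ceoJointQ pQ pX W1 W2 c1 c2) ≤ r.2.1 ∧
        IQsum (ceoJointQ pQ pX W1 W2 c1 c2) ≤ r.1 + r.2.1 ∧
        HXQ (ceoJointQ pQ pX W1 W2 c1 c2) ≤ r.2.2}
    = convexHull ℝ
      ({r : ℝ × ℝ × ℝ | 0 ≤ r.1 ∧ 0 ≤ r.2.1 ∧ Dceo1 Y1 Y2 pX W1 W2 r.1 r.2.1 ≤ r.2.2}
        ∪ {r : ℝ × ℝ × ℝ | 0 ≤ r.1 ∧ 0 ≤ r.2.1 ∧ Dceo2 Y1 Y2 pX W1 W2 r.1 r.2.1 ≤ r.2.2}) := by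
  obtain ⟨x⟩ := hpX.nonempty
  have := (hW1 x).nonempty
  have := (hW2 x).nonempty
  exact ceo_region_decomposition_general le_rfl hpX hW1 hW2
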